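/- Let A be a unital complex Banach algebra, let S = M_{a,b} + M_{c,d} be a spectrally bounded elementary operator on A of length 2, and set S* = M_{b,a} + M_{d,c}. Let ρ be an irreducible representation of A on a complex Banach space E. If dim E ≠ 2, then the induced map S_ρ* S_ρ on ρ(A) is a scalar multiple of the identity map, i.e. there is μ ∈ ℂ with S_ρ*(S_ρ(z)) = μ·z for all z ∈ ρ(A). If dim E = 2, then either S_ρ* S_ρ is a scalar multiple of the identity map or there is μ ∈ ℂ with S_ρ*(S_ρ(z)) = μ·Tr(z)·I for all z ∈ ρ(A). In either case, the commutator [S*(S(x)), x] lies in rad(A) for every x ∈ A. -/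

import Mathlib

open scoped ENNReal NNReal

/-- The Jacobson radical of a (possibly noncommutative) ring. -/
noncomputable def jacobsonRadical (A : Type*) [Ring A] : Ideal A :=
  Ideal.jacobson (⊥ : Ideal A)

/-- A map between complex algebras is spectrally bounded if `r(Tx) ≤ M·r(x)`
for some constant `M ≥ 0` and all `x`. -/
def SpectrallyBounded {A B : Type*} [Ring A] [Algebra ℂ A] [Ring B] [Algebra ℂ B]
    (T : A → B) : Prop :=
  ∃ M : ℝ≥0, ∀ x : A, spectralRadius ℂ (T x) ≤ (M : ℝ≥0∞) * spectralRadius ℂ x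

/-! Write `S = M_{a,b} + M_{c,d}` and let `E` be a simple `A`-module. If `N` raises the weights of a
diagonalizable `H` by one, then `exp (tH) * N * exp (-tH) = e ^ t * N`. By the density theorem this
identity can be realised inside `A` on any finite set of vectors. Conjugation does not change the
spectral radius, so an eigenvalue `μ` of `S N` yields `|e ^ t * μ| ≤ M * r(x)` for all `t`, whence
`μ = 0`. Nilpotent operators of rank at most two are of this kind.

If `N = Q P` with `P : E → V`, then `S N` factors through `V × V`; the reversed product is a
nilpotent `2 × 2` block matrix whose trace is `Tr (P (b a + d c) Q)` and whose square has trace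
`Tr (P (S* S N) Q)`. Hence `b a + d c` is scalar, and polarising the second identity gives
`f ((S* S) (g ⊗ ξ) ζ) = 0` whenever `f ξ = f ζ = g ξ = 0`. For `dim E > 2` this forces `S* S` to act
on all operators of rank one by the same scalar.

For `dim E = 2`, the vanishing of `det (S N)` when `N ^ 2 = 0` is the vanishing of a product of two
polynomials. So `adj a * c` or `d * adj b` is scalar, and therefore `S† S = k` for
`S† = M_{adj a, adj b} + M_{adj c, adj d}`. Since `S* y = adj (S† (adj y))`, the composition `S* S`
is a combination of the identity and the trace; if `k ≠ 0`, then `S` is invertible and the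
coefficient of the trace vanishes.

In every case `S* (S x)` commutes with `x` on `E`. The commutator therefore annihilates all simple
modules, that is, it lies in the Jacobson radical. -/

/-- The elementary operator `M_{a,b} + M_{c,d}`, that is `x ↦ a * x * b + c * x * d`, as a linear
map over the scalars `K`. -/
def elemOp (K : Type*) {R : Type*} [CommSemiring K] [Semiring R] [Algebra K R]
    (a b c d : R) : R →ₗ[K] R :=
  LinearMap.mulLeftRight K (a, b) + LinearMap.mulLeftRight K (c, d)

/-- The composition `S* ∘ S` for `S = M_{a,b} + M_{c,d}`, where `S* = M_{b,a} + M_{d,c}`. -/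
def starCompSelf (K : Type*) {R : Type*} [CommSemiring K] [Semiring R] [Algebra K R]
    (a b c d : R) : R →ₗ[K] R :=
  elemOp K b a d c ∘ₗ elemOp K a b c d

/-- `N` raises weights by one: some diagonalizable `H` satisfies `[H, N] = N`, so that `N` maps the
`μ`-eigenspace of `H` into the `(μ + 1)`-eigenspace. Diagonalizability is expressed by the
eigenvectors of `H` spanning the space, which need not be finite-dimensional. -/
def IsWeightRaising {K E : Type*} [Field K] [AddCommGroup E] [Module K E]
    (N : Module.End K E) : Prop :=
  ∃ H : Module.End K E, Submodule.span K {v | ∃ μ : K, H v = μ • v} = ⊤ ∧ H * N = N * H + N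

/-- The operators `S N` with `N` weight raising have no nonzero eigenvalue. For operators of finite
rank over an algebraically closed field this says that `S N` is nilpotent. -/
def PreservesNilpotence {K E : Type*} [Field K] [AddCommGroup E] [Module K E]
    (S : Module.End K E →ₗ[K] Module.End K E) : Prop :=
  ∀ N, IsWeightRaising N → ∀ μ : K, (S N).HasEigenvalue μ → μ = 0

section ElementaryOperators

variable {K R R' F : Type*} [CommSemiring K] [Semiring R] [Algebra K R] [Semiring R'] [Algebra K R']

theorem elemOp_apply (a b c d x : R) : elemOp K a b c d x = a * x * b + c * x * d := rfl

theorem starCompSelf_apply (a b c d x : R) : starCompSelf K a b c d x =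
    b * (a * x * b + c * x * d) * a + d * (a * x * b + c * x * d) * c := rfl

variable [FunLike F R R'] [AlgHomClass F K R R']

theorem map_elemOp (f : F) (a b c d x : R) :
    f (elemOp K a b c d x) = elemOp K (f a) (f b) (f c) (f d) (f x) := by
  simp only [elemOp_apply, map_add, map_mul]

theorem map_starCompSelf (f : F) (a b c d x : R) :
    f (starCompSelf K a b c d x) = starCompSelf K (f a) (f b) (f c) (f d) (f x) := by
  simp only [starCompSelf, LinearMap.comp_apply, map_elemOp]

end ElementaryOperators

section RankOne

open Module

variable {K E : Type*} [CommSemiring K] [AddCommMonoid E] [Module K E] {a b c d : End K E}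

theorem starCompSelf_smulRight_apply (g : Dual K E) (ξ η : E) :
    starCompSelf K a b c d (g.smulRight ξ) η = g (b (a η)) • b (a ξ) + g (d (a η)) • b (c ξ) +
      g (b (c η)) • d (a ξ) + g (d (c η)) • d (c ξ) := by
  simp only [starCompSelf_apply, LinearMap.add_apply, End.mul_apply, LinearMap.smulRight_apply,
    map_add, map_smul]
  abel

theorem starCompSelf_smulRight_symm (f g : Dual K E) (ξ ζ : E) :
    f (starCompSelf K a b c d (g.smulRight ξ) ζ) =
      g (starCompSelf K a b c d (f.smulRight ζ) ξ) := by
  simp only [starCompSelf_smulRight_apply, map_add, map_smul, smul_eq_mul]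
  ring

end RankOne

section WeightRaising

open Module

variable {K E V : Type*} [Field K] [AddCommGroup E] [Module K E] [AddCommGroup V] [Module K V]

theorem isWeightRaising_of_mul_self_eq_zero {N : End K E} (hN : N * N = 0) :
    IsWeightRaising N := by
  obtain ⟨p, hp⟩ := N.range.subtype.exists_leftInverse_of_injective N.range.ker_subtype
  let H : End K E := N.range.subtype ∘ₗ p
  have hHN (v : E) : H (N v) = N v := congr(($hp ⟨N v, v, rfl⟩ : E))
  have hrange (v : E) : ∃ w, N w = H v := (p v).2
  refine ⟨H, eq_top_iff.mpr fun v _ ↦ ?_, ?_⟩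
  · obtain ⟨w, hw⟩ := hrange v
    have hHH : H (H v) = H v := hw ▸ hHN w
    rw [← add_sub_cancel (H v) v]
    exact add_mem (Submodule.subset_span ⟨1, by rw [hHH, one_smul]⟩)
      (Submodule.subset_span ⟨0, by rw [map_sub, hHH, sub_self, zero_smul]⟩)
  · ext v
    obtain ⟨w, hw⟩ := hrange v
    have hNN : N (N w) = 0 := congr($hN w)
    simp [hHN, ← hw, hNN]

theorem isWeightRaising_smulRight_add {f g : Dual K E} {ξ ζ : E} (hfξ : f ξ = 0) (hfζ : f ζ = 0)
    (hgξ : g ξ = 0) : IsWeightRaising (g.smulRight ξ + f.smulRight ζ : End K E) := by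
  by_cases hξ : ξ = 0
  · exact isWeightRaising_of_mul_self_eq_zero (by ext; simp [hξ, hfζ])
  by_cases hgζ : g ζ = 0
  · exact isWeightRaising_of_mul_self_eq_zero (by ext; simp [hfξ, hfζ, hgξ, hgζ])
  obtain ⟨h, hhξ, hhζ⟩ : ∃ h : Dual K E, h ξ = 1 ∧ h ζ = 0 := by
    obtain ⟨h, hh⟩ := Projective.exists_dual_eq_one K hξ
    exact ⟨h - (h ζ * (g ζ)⁻¹) • g, by simp [hh, hgξ], by simp [hgζ]⟩
  -- `N` maps `ker g ⊓ ker h` into the line of `ζ` and `ζ` into the line of `ξ`: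
  -- the weights are `0`, `1`, `2`.
  let H : End K E := (2 : K) • h.smulRight ξ + (g ζ)⁻¹ • g.smulRight ζ
  have hHξ : H ξ = (2 : K) • ξ := by simp [H, hhξ, hgξ]
  have hHζ : H ζ = (1 : K) • ζ := by simp [H, hhζ, hgζ]
  refine ⟨H, eq_top_iff.mpr fun v _ ↦ ?_, ?_⟩
  · have hv : H (v - (h v • ξ + ((g ζ)⁻¹ * g v) • ζ)) =
        (0 : K) • (v - (h v • ξ + ((g ζ)⁻¹ * g v) • ζ)) := by
      rw [map_sub, map_add, map_smul, map_smul, hHξ, hHζ, zero_smul]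
      simp only [H, LinearMap.add_apply, LinearMap.smul_apply, LinearMap.smulRight_apply]
      module
    rw [← sub_add_cancel v (h v • ξ + ((g ζ)⁻¹ * g v) • ζ)]
    exact add_mem (Submodule.subset_span ⟨0, hv⟩) (add_mem
      (Submodule.smul_mem _ _ (Submodule.subset_span ⟨2, hHξ⟩))
      (Submodule.smul_mem _ _ (Submodule.subset_span ⟨1, hHζ⟩)))
  · ext v
    have hgH : g (H v) = g v := by simp [H, hgξ, mul_left_comm _ (g v), hgζ]
    have hfH : f (H v) = 0 := by simp [H, hfξ, hfζ]
    simp only [End.mul_apply, LinearMap.add_apply, LinearMap.smulRight_apply, map_add, map_smul,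
      hHξ, hHζ, hgH, hfH]
    module

theorem isNilpotent_of_forall_hasEigenvalue_eq_zero [IsAlgClosed K] [FiniteDimensional K V]
    {T : End K V} (hT : ∀ μ, T.HasEigenvalue μ → μ = 0) : IsNilpotent T := by
  rw [LinearMap.isNilpotent_iff_charpoly]
  have hroots : T.charpoly.roots = Multiset.replicate (finrank K V) 0 := by
    rw [← T.charpoly_natDegree, ← (IsAlgClosed.splits T.charpoly).natDegree_eq_card_roots.symm]
    refine Multiset.eq_replicate_card.mpr fun μ hμ ↦ hT μ ?_
    exact (T.hasEigenvalue_iff_isRoot_charpoly μ).mpr (Polynomial.isRoot_of_mem_roots hμ)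
  rw [(IsAlgClosed.splits T.charpoly).eq_prod_roots_of_monic T.charpoly_monic, hroots]
  simp

theorem hasEigenvalue_comp_comm {P : E →ₗ[K] V} {Q : V →ₗ[K] E} {μ : K} (hμ : μ ≠ 0)
    (h : End.HasEigenvalue (P ∘ₗ Q) μ) : End.HasEigenvalue (Q ∘ₗ P) μ := by
  obtain ⟨v, hv⟩ := h.exists_hasEigenvector
  have hPQ : P (Q v) = μ • v := hv.apply_eq_smul
  refine End.hasEigenvalue_of_hasEigenvector (x := Q v) ⟨End.mem_eigenspace_iff.mpr ?_, fun h0 ↦ ?_⟩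
  · rw [LinearMap.comp_apply, hPQ, map_smul]
  · rw [h0, map_zero] at hPQ
    exact (smul_ne_zero hμ hv.2) hPQ.symm

theorem trace_prod {R M N : Type*} [CommRing R] [AddCommGroup M] [Module R M] [AddCommGroup N]
    [Module R N] [Module.Free R M] [Module.Finite R M] [Module.Free R N] [Module.Finite R N]
    (T : End R (M × N)) : LinearMap.trace R _ T =
      LinearMap.trace R _ (LinearMap.fst R M N ∘ₗ T ∘ₗ LinearMap.inl R M N) +
      LinearMap.trace R _ (LinearMap.snd R M N ∘ₗ T ∘ₗ LinearMap.inr R M N) := by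
  rw [LinearMap.trace_comp_comm' _ (LinearMap.fst R M N),
    LinearMap.trace_comp_comm' _ (LinearMap.snd R M N), ← map_add]
  congr 1
  ext <;> simp [Prod.mk_zero_zero]

variable [IsAlgClosed K] {a b c d : End K E}

theorem PreservesNilpotence.trace_eq_zero [FiniteDimensional K V]
    (hS : PreservesNilpotence (elemOp K a b c d)) {P : E →ₗ[K] V} {Q : V →ₗ[K] E}
    (hN : IsWeightRaising (Q ∘ₗ P)) :
    LinearMap.trace K V (P ∘ₗ (b * a + d * c) ∘ₗ Q) = 0 ∧
      LinearMap.trace K V (P ∘ₗ starCompSelf K a b c d (Q ∘ₗ P) ∘ₗ Q) = 0 := by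
  let P' : E →ₗ[K] V × V := (P ∘ₗ b).prod (P ∘ₗ d)
  let Q' : V × V →ₗ[K] E := (a ∘ₗ Q).coprod (c ∘ₗ Q)
  have hQP : Q' ∘ₗ P' = elemOp K a b c d (Q ∘ₗ P) := by ext; simp [P', Q', elemOp_apply]
  have hnil : IsNilpotent (P' ∘ₗ Q' : End K (V × V)) := by
    refine isNilpotent_of_forall_hasEigenvalue_eq_zero fun μ hμ ↦ ?_
    by_contra hne
    exact hne (hS _ hN μ (hQP ▸ hasEigenvalue_comp_comm hne hμ))
  have h1 := (LinearMap.isNilpotent_trace_of_isNilpotent hnil).eq_zero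
  have h2 := (LinearMap.isNilpotent_trace_of_isNilpotent (hnil.pow_succ 1)).eq_zero
  rw [trace_prod, ← map_add] at h1 h2
  constructor
  · rw [← h1]
    congr 1
    ext
    simp [P', Q']
  · rw [← h2]
    congr 1
    ext
    simp [P', Q', pow_two, starCompSelf_apply]

theorem PreservesNilpotence.dual_add_eq_zero (hS : PreservesNilpotence (elemOp K a b c d))
    {f g : Dual K E} {ξ ζ : E} (hfξ : f ξ = 0) (hfζ : f ζ = 0) (hgξ : g ξ = 0) :
    g ((b * a + d * c) ξ) + f ((b * a + d * c) ζ) = 0 ∧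
      g (starCompSelf K a b c d (g.smulRight ξ + f.smulRight ζ) ξ) +
        f (starCompSelf K a b c d (g.smulRight ξ + f.smulRight ζ) ζ) = 0 := by
  let P : E →ₗ[K] K × K := g.prod f
  let Q : K × K →ₗ[K] E :=
    (LinearMap.toSpanSingleton K E ξ).coprod (LinearMap.toSpanSingleton K E ζ)
  have hQP : Q ∘ₗ P = g.smulRight ξ + f.smulRight ζ := by ext; simp [P, Q]
  have htr (T : End K E) : LinearMap.trace K _ (P ∘ₗ T ∘ₗ Q) = g (T ξ) + f (T ζ) := by
    have htrace_self (L : End K K) : LinearMap.trace K K L = L 1 := by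
      have hL : L = L 1 • LinearMap.id := by ext; simp
      rw [hL, map_smul, LinearMap.trace_id, finrank_self]
      simp
    simp [trace_prod, htrace_self, P, Q]
  have := hS.trace_eq_zero (hQP ▸ isWeightRaising_smulRight_add hfξ hfζ hgξ)
  rwa [htr, htr, hQP] at this

end WeightRaising

section RankGreaterThanTwo

open Module

variable {K E V W : Type*} [Field K] [AddCommGroup E] [Module K E] [AddCommGroup V] [Module K V]
  [AddCommGroup W] [Module K W]

theorem exists_eq_smul_of_forall_dual {v w : E} (h : ∀ f : Dual K E, f v = 0 → f w = 0) :
    ∃ c : K, w = c • v := by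
  suffices w ∈ K ∙ v from (Submodule.mem_span_singleton.mp this).imp fun _ ↦ Eq.symm
  by_contra hw
  obtain ⟨f, hfw, hf⟩ := Submodule.exists_le_ker_of_notMem hw
  exact hfw (h f (hf (Submodule.mem_span_singleton_self v)))

theorem exists_eq_smul_one_of_forall_dual {D : End K E}
    (h : ∀ (f : Dual K E) (v : E), f v = 0 → f (D v) = 0) : ∃ c : K, D = c • 1 := by
  refine D.exists_eq_smul_id_of_forall_notLinearIndependent fun v hv ↦ ?_
  obtain ⟨c, hc⟩ := exists_eq_smul_of_forall_dual (h · v)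
  have := LinearIndependent.pair_iff.mp hv c (-1) (by simp [hc])
  simp at this

theorem exists_eq_smul_of_forall_exists {Θ ι : V →ₗ[K] W} (hι : Function.Injective ι)
    (h : ∀ v, ∃ c : K, Θ v = c • ι v) : ∃ c : K, ∀ v, Θ v = c • ι v := by
  obtain ⟨p, hp⟩ := ι.exists_leftInverse_of_injective (LinearMap.ker_eq_bot.mpr hι)
  have hpι (v : V) : p (ι v) = v := congr($hp v)
  have hpΘ {v : V} {k : K} (hk : Θ v = k • ι v) : p (Θ v) = k • v := by rw [hk, map_smul, hpι]
  obtain ⟨c, hc⟩ := exists_eq_smul_one_of_forall_dual (D := p ∘ₗ Θ) fun f v hv ↦ by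
    obtain ⟨k, hk⟩ := h v
    rw [LinearMap.comp_apply, hpΘ hk, map_smul, hv, smul_zero]
  refine ⟨c, fun v ↦ ?_⟩
  obtain ⟨k, hk⟩ := h v
  rw [hk, ← map_smul, ← hpΘ hk, ← map_smul]
  exact congr(ι ($hc v))

theorem exists_eq_smul_of_forall_apply_eq_zero {f g : Dual K E} (h : ∀ v, f v = 0 → g v = 0) :
    ∃ c : K, g = c • f := by
  have hle : ⨅ _ : Unit, f.ker ≤ g.ker := (iInf_const (a := f.ker)).trans_le fun v hv ↦ h v hv
  have := mem_span_of_iInf_ker_le_ker hle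
  rw [Set.range_const] at this
  exact (Submodule.mem_span_singleton.mp this).imp fun _ ↦ Eq.symm

theorem exists_dual_ne_zero_of_two_lt_rank (hE : 2 < Module.rank K E) (ξ η : E) :
    ∃ f : Dual K E, f ≠ 0 ∧ f ξ = 0 ∧ f η = 0 := by
  classical
  have hlt : Submodule.span K {ξ, η} < ⊤ := by
    refine lt_top_iff_ne_top.mpr fun htop ↦ hE.not_ge ?_
    rw [← rank_top K E, ← htop]
    have hspan := rank_span_finset_le (R := K) {ξ, η}
    rw [Finset.coe_pair] at hspan
    exact hspan.trans (by exact_mod_cast Finset.card_le_two)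
  obtain ⟨f, hf, hle⟩ := Submodule.exists_le_ker_of_lt_top _ hlt
  exact ⟨f, hf, hle (Submodule.subset_span (by simp)), hle (Submodule.subset_span (by simp))⟩

theorem exists_mem_span_smulRight_eqOn (x : End K E) (s : Finset E) :
    ∃ y ∈ Submodule.span K (Set.range fun p : Dual K E × E ↦ (p.1.smulRight p.2 : End K E)),
      Set.EqOn x y s := by
  let F := Submodule.span K (s : Set E)
  obtain ⟨p, hp⟩ := F.subtype.exists_leftInverse_of_injective F.ker_subtype
  let B := Module.finBasis K F
  refine ⟨∑ i, (B.coord i ∘ₗ p).smulRight (x (B i)), Submodule.sum_mem _ fun i _ ↦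
    Submodule.subset_span ⟨(B.coord i ∘ₗ p, x (B i)), rfl⟩, fun v hv ↦ ?_⟩
  have hpv : p v = ⟨v, Submodule.subset_span hv⟩ := congr($hp ⟨v, Submodule.subset_span hv⟩)
  calc x v = x (F.subtype (∑ i, B.repr (p v) i • B i)) := by rw [B.sum_repr, hpv]; rfl
    _ = _ := by
      simp only [map_sum, map_smul, LinearMap.sum_apply, LinearMap.smulRight_apply]
      rfl

theorem exists_dual_eq_zero_ne_zero_of_two_lt_rank (hE : 2 < Module.rank K E) {g : Dual K E}
    (hg : g ≠ 0) (ξ : E) : ∃ (ζ : E) (f : Dual K E), g ζ = 0 ∧ f ξ = 0 ∧ f ζ ≠ 0 := by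
  obtain ⟨η, hη⟩ := DFunLike.ne_iff.mp hg
  obtain ⟨f, hf, hfξ, hfη⟩ := exists_dual_ne_zero_of_two_lt_rank hE ξ η
  obtain ⟨θ, hθ⟩ := DFunLike.ne_iff.mp hf
  have hη : g η ≠ 0 := hη
  exact ⟨θ - (g θ * (g η)⁻¹) • η, f, by simp [hη], hfξ, by simpa [hfη] using hθ⟩

namespace PreservesNilpotence

variable [IsAlgClosed K] {a b c d : End K E}

theorem dual_add_apply_eq_zero (hS : PreservesNilpotence (elemOp K a b c d))
    {f : Dual K E} {ξ : E} (hf : f ξ = 0) : f ((b * a + d * c) ξ) = 0 := by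
  simpa using (hS.dual_add_eq_zero (g := 0) (ξ := 0) (map_zero f) hf rfl).1

theorem exists_add_eq_smul_one (hS : PreservesNilpotence (elemOp K a b c d)) :
    ∃ k : K, b * a + d * c = k • 1 :=
  exists_eq_smul_one_of_forall_dual fun _ _ ↦ hS.dual_add_apply_eq_zero

theorem dual_starCompSelf_smulRight_self (hS : PreservesNilpotence (elemOp K a b c d))
    {f : Dual K E} {ξ : E} (hf : f ξ = 0) : f (starCompSelf K a b c d (f.smulRight ξ) ξ) = 0 := by
  simpa using (hS.dual_add_eq_zero (g := 0) (ξ := 0) (map_zero f) hf rfl).2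

variable [NeZero (2 : K)]

theorem dual_starCompSelf_smulRight (hS : PreservesNilpotence (elemOp K a b c d))
    {f g : Dual K E} {ξ ζ : E} (hfξ : f ξ = 0) (hfζ : f ζ = 0) (hgξ : g ξ = 0) :
    f (starCompSelf K a b c d (g.smulRight ξ) ζ) = 0 := by
  have hsum := (hS.dual_add_eq_zero hfξ hfζ hgξ).2
  simp only [map_add, LinearMap.add_apply, hS.dual_starCompSelf_smulRight_self hgξ,
    hS.dual_starCompSelf_smulRight_self hfζ, starCompSelf_smulRight_symm g f, zero_add, add_zero,
    ← two_mul] at hsum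
  exact (mul_eq_zero.mp hsum).resolve_left two_ne_zero

theorem exists_dual_comp_starCompSelf_eq_zero (hS : PreservesNilpotence (elemOp K a b c d))
    (hE : 2 < Module.rank K E) (ξ : E) :
    ∃ f : Dual K E, f ≠ 0 ∧ f ξ = 0 ∧
      ∀ (g : Dual K E) (η : E), f (starCompSelf K a b c d (g.smulRight ξ) η) = 0 := by
  have hdc {f : Dual K E} (hf : f ξ = 0) : f (d (c ξ)) = -f (b (a ξ)) := by
    rw [eq_neg_iff_add_eq_zero, add_comm]
    simpa using hS.dual_add_apply_eq_zero hf
  have hquad {f g : Dual K E} (hf : f ξ = 0) (hg : g ξ = 0) :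
      2 * (f (b (a ξ)) * g (b (a ξ))) + f (b (c ξ)) * g (d (a ξ)) +
        f (d (a ξ)) * g (b (c ξ)) = 0 := by
    have := hS.dual_starCompSelf_smulRight hf hf hg
    simp only [starCompSelf_smulRight_apply, map_add, map_smul, smul_eq_mul, hdc hf, hdc hg] at this
    linear_combination this
  suffices ∃ f : Dual K E, f ≠ 0 ∧ f ξ = 0 ∧ f (b (c ξ)) = 0 ∧ f (d (a ξ)) = 0 by
    obtain ⟨f, hf, hfξ, hfq, hfr⟩ := this
    have hfp : f (b (a ξ)) = 0 := by simpa [hfq, two_ne_zero] using hquad hfξ hfξ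
    refine ⟨f, hf, hfξ, fun g η ↦ ?_⟩
    simp [starCompSelf_smulRight_apply, hdc hfξ, hfp, hfq, hfr]
  obtain ⟨f, hf, hfξ, hfq⟩ := exists_dual_ne_zero_of_two_lt_rank hE ξ (b (c ξ))
  by_cases hfr : f (d (a ξ)) = 0
  · exact ⟨f, hf, hfξ, hfq, hfr⟩
  have hfp : f (b (a ξ)) = 0 := by simpa [hfq, two_ne_zero] using hquad hfξ hfξ
  obtain ⟨h, hh, hhξ, hhr⟩ := exists_dual_ne_zero_of_two_lt_rank hE ξ (d (a ξ))
  exact ⟨h, hh, hhξ, by simpa [hfp, hfq, hfr] using hquad hfξ hhξ, hhr⟩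

theorem exists_starCompSelf_smulRight_apply_eq_smul (hS : PreservesNilpotence (elemOp K a b c d))
    (hE : 2 < Module.rank K E) {g : Dual K E} {ξ : E} (hg : g ξ = 0) (η : E) :
    ∃ k : K, starCompSelf K a b c d (g.smulRight ξ) η = k • ξ := by
  set T := starCompSelf K a b c d (g.smulRight ξ)
  let W : Submodule K (Dual K E) := (Dual.eval K E ξ).ker
  obtain ⟨k, hk⟩ := exists_eq_smul_of_forall_exists (ι := W.subtype)
    (Θ := T.dualMap ∘ₗ W.subtype) W.injective_subtype fun f : W ↦
      exists_eq_smul_of_forall_apply_eq_zero (f := f.1) fun ζ hζ ↦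
        hS.dual_starCompSelf_smulRight f.2 hζ hg
  obtain ⟨f, hf, hfξ, hfT⟩ := hS.exists_dual_comp_starCompSelf_eq_zero hE ξ
  have hk0 : k = 0 := by
    have : k • f = 0 := (hk ⟨f, hfξ⟩).symm.trans (LinearMap.ext (hfT g))
    exact (smul_eq_zero.mp this).resolve_right hf
  exact exists_eq_smul_of_forall_dual fun h hh ↦ by simpa [hk0] using congr($(hk ⟨h, hh⟩) η)

theorem starCompSelf_smulRight_apply_eq_zero (hS : PreservesNilpotence (elemOp K a b c d))
    (hE : 2 < Module.rank K E) {g : Dual K E} {ξ η : E} (hξ : g ξ = 0) (hη : g η = 0) :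
    starCompSelf K a b c d (g.smulRight ξ) η = 0 := by
  set T := starCompSelf K a b c d (g.smulRight ξ)
  have hindep {f : Dual K E} {ζ : E} (hgζ : g ζ = 0) (hfξ : f ξ = 0) (hfζ : f ζ ≠ 0) : T ζ = 0 := by
    obtain ⟨k, hk⟩ := hS.exists_starCompSelf_smulRight_apply_eq_smul hE hξ ζ
    obtain ⟨l, hl⟩ := exists_eq_smul_of_forall_dual (v := ζ) (w := T ζ) fun h hh ↦ by
      rw [starCompSelf_smulRight_symm]
      exact hS.dual_starCompSelf_smulRight hgζ hξ hh
    have hkl : l * f ζ = k * f ξ := by simpa using congr(f $(hl.symm.trans hk))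
    rw [hfξ, mul_zero] at hkl
    rw [hl, (mul_eq_zero.mp hkl).resolve_right hfζ, zero_smul]
  by_cases hg : g = 0
  · simp [T, hg]
  obtain ⟨ζ, f, hgζ, hfξ, hfζ⟩ := exists_dual_eq_zero_ne_zero_of_two_lt_rank hE hg ξ
  by_cases hfη : f η = 0
  · have := hindep (ζ := ζ + η) (by simp [hgζ, hη]) hfξ (by simpa [hfη] using hfζ)
    simpa [hindep hgζ hfξ hfζ] using this
  · exact hindep hη hfξ hfη

theorem exists_starCompSelf_smulRight_eq_smul (hS : PreservesNilpotence (elemOp K a b c d))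
    (hE : 2 < Module.rank K E) {g : Dual K E} {ξ : E} (hg : g ξ = 0) :
    ∃ k : K, starCompSelf K a b c d (g.smulRight ξ) = k • (g.smulRight ξ : End K E) := by
  by_cases hg0 : g = 0
  · exact ⟨0, by simp [hg0]⟩
  obtain ⟨θ, hθ⟩ := DFunLike.ne_iff.mp hg0
  have hθ : g θ ≠ 0 := hθ
  obtain ⟨k, hk⟩ := hS.exists_starCompSelf_smulRight_apply_eq_smul hE hg θ
  refine ⟨k * (g θ)⁻¹, LinearMap.ext fun η ↦ ?_⟩
  have hη := hS.starCompSelf_smulRight_apply_eq_zero hE hg (η := η - (g η * (g θ)⁻¹) • θ)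
    (by simp [hθ])
  rw [map_sub, map_smul, hk, sub_eq_zero] at hη
  rw [hη, LinearMap.smul_apply, LinearMap.smulRight_apply]
  module

theorem exists_forall_functional_starCompSelf_smulRight
    (hS : PreservesNilpotence (elemOp K a b c d)) (hE : 2 < Module.rank K E) {ξ : E} (hξ : ξ ≠ 0) :
    ∃ k : K, ∀ g : Dual K E, g ξ = 0 →
      starCompSelf K a b c d (g.smulRight ξ) = k • (g.smulRight ξ : End K E) := by
  let ι : (Dual.eval K E ξ).ker →ₗ[K] End K E :=
    (LinearMap.smulRightₗ.flip ξ).domRestrict (Dual.eval K E ξ).ker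
  have hι : Function.Injective ι := fun f g hfg ↦ Subtype.ext <| LinearMap.ext fun v ↦
    smul_left_injective K hξ (show f.1 v • ξ = g.1 v • ξ from congr($hfg v))
  have hlocal (g) : ∃ k : K, (starCompSelf K a b c d ∘ₗ ι) g = k • ι g :=
    hS.exists_starCompSelf_smulRight_eq_smul hE (LinearMap.mem_ker.mp g.2)
  obtain ⟨k, hk⟩ := exists_eq_smul_of_forall_exists (V := (Dual.eval K E ξ).ker) hι hlocal
  exact ⟨k, fun g hg ↦ hk ⟨g, hg⟩⟩

theorem exists_forall_vector_starCompSelf_smulRight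
    (hS : PreservesNilpotence (elemOp K a b c d)) (hE : 2 < Module.rank K E) {g : Dual K E}
    (hg : g ≠ 0) : ∃ k : K, ∀ ξ : E, g ξ = 0 →
      starCompSelf K a b c d (g.smulRight ξ) = k • (g.smulRight ξ : End K E) := by
  obtain ⟨θ, hθ⟩ := DFunLike.ne_iff.mp hg
  let ι : g.ker →ₗ[K] End K E := (LinearMap.smulRightₗ g).domRestrict g.ker
  have hι : Function.Injective ι := fun ξ ζ hξζ ↦ Subtype.ext <|
    smul_right_injective E hθ (show g θ • ξ.1 = g θ • ζ.1 from congr($hξζ θ))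
  have hlocal (ξ) : ∃ k : K, (starCompSelf K a b c d ∘ₗ ι) ξ = k • ι ξ :=
    hS.exists_starCompSelf_smulRight_eq_smul hE ξ.2
  obtain ⟨k, hk⟩ := exists_eq_smul_of_forall_exists (V := g.ker) hι hlocal
  exact ⟨k, fun ξ hξ ↦ hk ⟨ξ, hξ⟩⟩

theorem exists_forall_starCompSelf_smulRight_of_apply_eq_zero
    (hS : PreservesNilpotence (elemOp K a b c d)) (hE : 2 < Module.rank K E) :
    ∃ k : K, ∀ (g : Dual K E) (ξ : E), g ξ = 0 →
      starCompSelf K a b c d (g.smulRight ξ) = k • (g.smulRight ξ : End K E) := by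
  have : Nontrivial E := rank_pos_iff_nontrivial.mp (pos_of_gt hE)
  obtain ⟨ξ₀, hξ₀⟩ := exists_ne (0 : E)
  obtain ⟨k, hk⟩ := hS.exists_forall_functional_starCompSelf_smulRight hE hξ₀
  refine ⟨k, fun g ξ hg ↦ ?_⟩
  by_cases hξ : ξ = 0
  · simp [hξ]
  obtain ⟨l, hl⟩ := hS.exists_forall_functional_starCompSelf_smulRight hE hξ
  obtain ⟨h, hh, hhξ, hhξ₀⟩ := exists_dual_ne_zero_of_two_lt_rank hE ξ ξ₀
  obtain ⟨m, hm⟩ := hS.exists_forall_vector_starCompSelf_smulRight hE hh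
  obtain ⟨θ, hθ⟩ := DFunLike.ne_iff.mp hh
  have hθ : h θ ≠ 0 := hθ
  have hsmul {ζ : E} (hζ : ζ ≠ 0) : (h.smulRight ζ : End K E) ≠ 0 :=
    fun h0 ↦ smul_ne_zero hθ hζ congr($h0 θ)
  have hlm : l = m := smul_left_injective K (hsmul hξ) ((hl h hhξ).symm.trans (hm ξ hhξ))
  have hkm : k = m := smul_left_injective K (hsmul hξ₀) ((hk h hhξ₀).symm.trans (hm ξ₀ hhξ₀))
  rw [hl g hg, hlm, hkm]

theorem exists_forall_starCompSelf_smulRight (hS : PreservesNilpotence (elemOp K a b c d))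
    (hE : 2 < Module.rank K E) : ∃ k : K, ∀ (g : Dual K E) (ξ : E),
      starCompSelf K a b c d (g.smulRight ξ) = k • (g.smulRight ξ : End K E) := by
  obtain ⟨k, hk⟩ := hS.exists_forall_starCompSelf_smulRight_of_apply_eq_zero hE
  refine ⟨k, fun g ξ ↦ sub_eq_zero.mp ?_⟩
  obtain ⟨m, hm⟩ := exists_eq_smul_one_of_forall_dual
    (D := starCompSelf K a b c d (g.smulRight ξ) - k • (g.smulRight ξ : End K E)) fun f η hf ↦ by
      rw [LinearMap.sub_apply, map_sub, starCompSelf_smulRight_symm, hk f η hf]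
      simp only [LinearMap.smul_apply, LinearMap.smulRight_apply, map_smul, smul_eq_mul]
      ring
  obtain ⟨f, hf, hfξ, hfT⟩ := hS.exists_dual_comp_starCompSelf_eq_zero hE ξ
  obtain ⟨η, hη⟩ := DFunLike.ne_iff.mp hf
  have hη : f η ≠ 0 := hη
  have hm0 : m * f η = 0 := by simpa [hfT, hfξ] using congr(f ($hm η)).symm
  rw [hm, (mul_eq_zero.mp hm0).resolve_right hη, zero_smul]

theorem exists_starCompSelf_eq_smul_of_two_lt_rank (hS : PreservesNilpotence (elemOp K a b c d))
    (hE : 2 < Module.rank K E) : ∃ k : K, ∀ x, starCompSelf K a b c d x = k • x := by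
  classical
  obtain ⟨k, hk⟩ := hS.exists_forall_starCompSelf_smulRight hE
  refine ⟨k, fun x ↦ LinearMap.ext fun η ↦ ?_⟩
  obtain ⟨y, hy, hxy⟩ := exists_mem_span_smulRight_eqOn x {η, b (a η), d (a η), b (c η), d (c η)}
  have hky : starCompSelf K a b c d y = k • y :=
    LinearMap.eqOn_span (g := k • LinearMap.id) (by rintro _ ⟨⟨g, ξ⟩, rfl⟩; exact hk g ξ) hy
  have hx : starCompSelf K a b c d x η = starCompSelf K a b c d y η := by
    simp [starCompSelf_apply, hxy (show b (a η) ∈ _ by simp), hxy (show d (a η) ∈ _ by simp),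
      hxy (show b (c η) ∈ _ by simp), hxy (show d (c η) ∈ _ by simp)]
  rw [hx, hky, LinearMap.smul_apply, LinearMap.smul_apply, hxy (by simp)]

theorem exists_starCompSelf_eq_smul_of_finrank_ne_two
    (hS : PreservesNilpotence (elemOp K a b c d)) (hE : finrank K E ≠ 2) :
    ∃ k : K, ∀ x, starCompSelf K a b c d x = k • x := by
  by_cases hrank : 2 < Module.rank K E
  · exact hS.exists_starCompSelf_eq_smul_of_two_lt_rank hrank
  have hfin : FiniteDimensional K E :=
    rank_lt_aleph0_iff.mp ((not_lt.mp hrank).trans_lt Cardinal.natCast_lt_aleph0)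
  have hle : finrank K E ≤ 2 := finrank_le_of_rank_le (by exact_mod_cast not_lt.mp hrank)
  have hone : finrank K E ≤ 1 := by lia
  have hscalar (x : End K E) : ∃ k : K, x = k • 1 :=
    x.exists_eq_smul_id_of_forall_notLinearIndependent fun v hv ↦ by
      simpa using hv.fintype_card_le_finrank.trans hone
  obtain ⟨k, hk⟩ := hscalar (starCompSelf K a b c d 1)
  refine ⟨k, fun x ↦ ?_⟩
  obtain ⟨l, rfl⟩ := hscalar x
  rw [map_smul, hk, smul_comm]

end PreservesNilpotence

end RankGreaterThanTwo

section TwoByTwoMatrices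

open Matrix Polynomial

variable {K : Type*} [CommRing K]

theorem exists_eq_smul_one_or_of_forall_dotProduct_mulVec [IsDomain K] [Infinite K]
    {m n : Matrix (Fin 2) (Fin 2) K}
    (h : ∀ t : K, ![-t, 1] ⬝ᵥ m *ᵥ ![1, t] = 0 ∨ ![-t, 1] ⬝ᵥ n *ᵥ ![1, t] = 0) :
    (∃ k : K, m = k • 1) ∨ ∃ k : K, n = k • 1 := by
  let q (y : Matrix (Fin 2) (Fin 2) K) : K[X] :=
    C (y 1 0) + C (y 1 1 - y 0 0) * X - C (y 0 1) * X ^ 2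
  have hq (y) (t : K) : (q y).eval t = ![-t, 1] ⬝ᵥ y *ᵥ ![1, t] := by
    simp only [q, eval_add, eval_sub, eval_mul, eval_C, eval_X, eval_pow, dotProduct, mulVec,
      Fin.sum_univ_two, cons_val_zero, cons_val_one]
    ring
  have hscalar {y} (hy : q y = 0) : ∃ k : K, y = k • 1 := by
    have h0 : y 1 0 = 0 := by simpa [q] using congr(($hy).coeff 0)
    have h1 : y 1 1 = y 0 0 := by
      simpa [q, coeff_X, coeff_C, sub_eq_zero] using congr(($hy).coeff 1)
    have h2 : y 0 1 = 0 := by simpa [q, coeff_X, coeff_C] using congr(($hy).coeff 2)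
    refine ⟨y 0 0, ?_⟩
    ext i j
    fin_cases i <;> fin_cases j <;> simp [h0, h1, h2]
  have hmul : q m * q n = 0 := Polynomial.funext fun t ↦ by simpa [hq] using h t
  exact (mul_eq_zero.mp hmul).imp hscalar hscalar

theorem det_add_fin_two (x y : Matrix (Fin 2) (Fin 2) K) :
    (x + y).det = x.det + y.det + (adjugate x * y).trace := by
  simp only [det_fin_two, adjugate_fin_two, trace_fin_two, mul_apply, Fin.sum_univ_two,
    Matrix.add_apply, of_apply, cons_val', cons_val_zero, cons_val_one, cons_val_fin_one]
  ring

theorem adjugate_fin_two_eq_trace_smul_sub (x : Matrix (Fin 2) (Fin 2) K) :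
    adjugate x = x.trace • 1 - x := by
  ext i j
  fin_cases i <;> fin_cases j <;> simp [adjugate_fin_two, trace_fin_two]

theorem adjugate_add_fin_two (x y : Matrix (Fin 2) (Fin 2) K) :
    adjugate (x + y) = adjugate x + adjugate y := by
  simp only [adjugate_fin_two_eq_trace_smul_sub, trace_add]
  module

theorem adjugate_smul_one_fin_two (k : K) :
    adjugate (k • 1 : Matrix (Fin 2) (Fin 2) K) = k • 1 := by
  rw [adjugate_smul, adjugate_one, Fintype.card_fin, pow_one]

variable {a b c d : Matrix (Fin 2) (Fin 2) K}

theorem det_elemOp (x : Matrix (Fin 2) (Fin 2) K) : (elemOp K a b c d x).det =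
    (a.det * b.det + c.det * d.det) * x.det +
      (adjugate x * (adjugate a * c) * x * (d * adjugate b)).trace := by
  have htrace : (adjugate (a * x * b) * (c * x * d)).trace =
      (adjugate x * (adjugate a * c) * x * (d * adjugate b)).trace := by
    rw [adjugate_mul_distrib, adjugate_mul_distrib, mul_assoc, trace_mul_comm]
    simp only [mul_assoc]
  rw [elemOp_apply, det_add_fin_two, htrace]
  simp only [det_mul]
  ring

theorem exists_eq_smul_one_of_forall_det_elemOp_eq_zero [IsDomain K] [Infinite K]
    (hdet : ∀ x, x * x = 0 → (elemOp K a b c d x).det = 0) :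
    (∃ k : K, adjugate a * c = k • 1) ∨ ∃ k : K, d * adjugate b = k • 1 := by
  refine exists_eq_smul_one_or_of_forall_dotProduct_mulVec fun t ↦ ?_
  let x := vecMulVec ![1, t] ![-t, 1]
  have htrace : x.trace = 0 := by simp [x, trace_fin_two]
  have hxdet : x.det = 0 := by simp [x, det_fin_two]
  have hsq : x * x = 0 := by
    rw [vecMulVec_mul_vecMulVec]
    simp
  have h0 := hdet x hsq
  rw [det_elemOp, hxdet, mul_zero, zero_add, adjugate_fin_two_eq_trace_smul_sub, htrace, zero_smul,
    zero_sub, neg_mul, neg_mul, neg_mul, trace_neg, neg_eq_zero] at h0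
  rw [← mul_eq_zero, ← h0, vecMulVec_mul, vecMulVec_mul_vecMulVec, vecMulVec_mul, trace_vecMulVec,
    smul_vecMul, dotProduct_smul, smul_eq_mul, dotProduct_comm ![1, t], dotProduct_mulVec,
    dotProduct_mulVec]

theorem exists_elemOp_adjugate_elemOp_eq_smul
    (hscalar : (∃ k : K, adjugate a * c = k • 1) ∨ ∃ k : K, d * adjugate b = k • 1) :
    ∃ k : K, ∀ x, elemOp K (adjugate a) (adjugate b) (adjugate c) (adjugate d)
      (elemOp K a b c d x) = k • x := by
  set m := adjugate a * c with hm
  set n := d * adjugate b with hn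
  have hadj (y : Matrix (Fin 2) (Fin 2) K) : adjugate (adjugate y) = y := by
    simp [adjugate_adjugate]
  have hm' : adjugate m = adjugate c * a := by rw [hm, adjugate_mul_distrib, hadj]
  have hn' : adjugate n = b * adjugate d := by rw [hn, adjugate_mul_distrib, hadj]
  have hexpand (x) : elemOp K (adjugate a) (adjugate b) (adjugate c) (adjugate d)
      (elemOp K a b c d x) =
        (a.det * b.det + c.det * d.det) • x + m * x * n + adjugate m * x * adjugate n := by
    have hdiag (u v) : adjugate u * (u * x * v) * adjugate v = (u.det * v.det) • x := by
      rw [← mul_assoc, ← mul_assoc, adjugate_mul, mul_assoc, mul_adjugate]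
      simp only [smul_mul_assoc, one_mul, mul_smul_comm, mul_one, smul_smul, mul_comm u.det]
    simp only [elemOp_apply, mul_add, add_mul, hdiag, hm', hn', add_smul]
    simp only [hm, hn, mul_assoc]
    abel
  rcases hscalar with ⟨k, hk⟩ | ⟨k, hk⟩
  · refine ⟨a.det * b.det + c.det * d.det + k * n.trace, fun x ↦ ?_⟩
    rw [hexpand, hk, adjugate_smul_one_fin_two, adjugate_fin_two_eq_trace_smul_sub n]
    simp only [smul_mul_assoc, one_mul, mul_sub, mul_smul_comm, mul_one]
    module
  · refine ⟨a.det * b.det + c.det * d.det + m.trace * k, fun x ↦ ?_⟩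
    rw [hexpand, hk, adjugate_smul_one_fin_two, adjugate_fin_two_eq_trace_smul_sub m]
    simp only [smul_mul_assoc, one_mul, sub_mul, mul_smul_comm, mul_one]
    module

theorem trace_elemOp {n : Type*} [Fintype n] [DecidableEq n] {a b c d : Matrix n n K} {l : K}
    (hl : b * a + d * c = l • 1) (x : Matrix n n K) :
    (elemOp K a b c d x).trace = l * x.trace := by
  rw [elemOp_apply, trace_add, mul_assoc, trace_mul_comm, mul_assoc c, trace_mul_comm c,
    ← trace_add, mul_assoc, mul_assoc, ← mul_add, hl, mul_smul_one, trace_smul, smul_eq_mul]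

theorem elemOp_adjugate_one : elemOp K (adjugate a) (adjugate b) (adjugate c) (adjugate d) 1 =
    adjugate (b * a + d * c) := by
  simp only [elemOp_apply, mul_one, adjugate_add_fin_two, adjugate_mul_distrib]

theorem starCompSelf_eq_of_elemOp_adjugate_elemOp_eq_smul {k l : K}
    (hk : ∀ x, elemOp K (adjugate a) (adjugate b) (adjugate c) (adjugate d)
      (elemOp K a b c d x) = k • x) (hl : b * a + d * c = l • 1) (x : Matrix (Fin 2) (Fin 2) K) :
    starCompSelf K a b c d x = ((l ^ 2 - k) * x.trace) • 1 + k • x := by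
  have hadj (y) : elemOp K b a d c y =
      adjugate (elemOp K (adjugate a) (adjugate b) (adjugate c) (adjugate d) (adjugate y)) := by
    simp [elemOp_apply, adjugate_add_fin_two, adjugate_mul_distrib, adjugate_adjugate, mul_assoc]
  rw [starCompSelf, LinearMap.comp_apply, hadj,
    adjugate_fin_two_eq_trace_smul_sub (elemOp K a b c d x), map_sub, map_smul, hk,
    elemOp_adjugate_one, hl, trace_elemOp hl, adjugate_smul_one_fin_two,
    adjugate_fin_two_eq_trace_smul_sub]
  simp only [trace_sub, trace_smul, trace_one, smul_eq_mul, Fintype.card_fin, Nat.cast_ofNat]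
  module

theorem starCompSelf_eq_smul_or_eq_trace_smul_one {K : Type*} [Field K] [NeZero (2 : K)]
    {a b c d : Matrix (Fin 2) (Fin 2) K} {k l : K}
    (hk : ∀ x, elemOp K (adjugate a) (adjugate b) (adjugate c) (adjugate d)
      (elemOp K a b c d x) = k • x) (hl : b * a + d * c = l • 1) :
    (∃ μ : K, ∀ x, starCompSelf K a b c d x = μ • x) ∨
      ∃ μ : K, ∀ x, starCompSelf K a b c d x = (μ * x.trace) • 1 := by
  have hstar := starCompSelf_eq_of_elemOp_adjugate_elemOp_eq_smul hk hl
  by_cases hk0 : k = 0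
  · exact .inr ⟨l ^ 2, fun x ↦ by simp [hstar, hk0]⟩
  let T := elemOp K (adjugate a) (adjugate b) (adjugate c) (adjugate d)
  have hinv : (k⁻¹ • T) * elemOp K a b c d = 1 := LinearMap.ext fun x ↦ by
    simp [T, hk, hk0]
  have hone : l • elemOp K a b c d 1 = k • 1 := by
    have := congr($(mul_eq_one_comm.mp hinv) 1)
    rw [Module.End.mul_apply, LinearMap.smul_apply, elemOp_adjugate_one, hl,
      adjugate_smul_one_fin_two, map_smul, map_smul, Module.End.one_apply] at this
    rw [← smul_inv_smul₀ hk0 (l • elemOp K a b c d 1), this]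
  have htrace : (elemOp K a b c d 1).trace = l * 2 := by
    simp [trace_elemOp hl]
  have hl2 : l ^ 2 = k := by
    have := congr(trace $hone)
    rw [trace_smul, trace_smul, htrace, trace_one, smul_eq_mul, smul_eq_mul, ← mul_assoc] at this
    simpa [sq, two_ne_zero] using this
  exact .inl ⟨k, fun x ↦ by simp [hstar, hl2]⟩

end TwoByTwoMatrices

section FinrankEqTwo

open Module

variable {K E : Type*} [Field K] [IsAlgClosed K] [AddCommGroup E] [Module K E] {a b c d : End K E}

theorem PreservesNilpotence.det_eq_zero (hS : PreservesNilpotence (elemOp K a b c d))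
    [FiniteDimensional K E] [Nontrivial E] {x : End K E} (hx : x * x = 0) :
    LinearMap.det (elemOp K a b c d x) = 0 := by
  obtain ⟨μ, hμ⟩ := End.exists_eigenvalue (elemOp K a b c d x)
  obtain rfl := hS x (isWeightRaising_of_mul_self_eq_zero hx) μ hμ
  rw [LinearMap.det_eq_zero_iff_ker_ne_bot]
  simpa [End.hasEigenvalue_iff, End.eigenspace_zero] using hμ

theorem PreservesNilpotence.starCompSelf_eq_smul_or_eq_trace_smul_one [NeZero (2 : K)]
    (hS : PreservesNilpotence (elemOp K a b c d)) (hE : finrank K E = 2) :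
    (∃ μ : K, ∀ x, starCompSelf K a b c d x = μ • x) ∨
      ∃ μ : K, ∀ x, starCompSelf K a b c d x = (μ * LinearMap.trace K E x) • 1 := by
  have : FiniteDimensional K E := .of_finrank_eq_succ hE
  have : Nontrivial E := nontrivial_of_finrank_eq_succ hE
  let B := finBasisOfFinrankEq K E hE
  let e := LinearMap.toMatrixAlgEquiv B
  have htrace (x) : (e x).trace = LinearMap.trace K E x :=
    (LinearMap.trace_eq_matrix_trace K B x).symm
  have hdet (y : Matrix (Fin 2) (Fin 2) K) (hy : y * y = 0) :
      (elemOp K (e a) (e b) (e c) (e d) y).det = 0 := by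
    obtain ⟨x, rfl⟩ := e.surjective y
    have hx : x * x = 0 := e.injective (by rw [map_mul, hy, map_zero])
    rw [← map_elemOp, ← hS.det_eq_zero hx]
    exact LinearMap.det_toMatrix B _
  obtain ⟨l, hl⟩ := hS.exists_add_eq_smul_one
  have hl' : e b * e a + e d * e c = l • 1 := by
    simpa using congr(e $hl)
  obtain ⟨k, hk⟩ := exists_elemOp_adjugate_elemOp_eq_smul
    (exists_eq_smul_one_of_forall_det_elemOp_eq_zero hdet)
  refine (_root_.starCompSelf_eq_smul_or_eq_trace_smul_one hk hl').imp ?_ ?_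
  all_goals
    rintro ⟨μ, hμ⟩
    refine ⟨μ, fun x ↦ e.injective ?_⟩
    rw [map_starCompSelf, hμ]
    simp [htrace]

end FinrankEqTwo

section SimpleModules

variable {A : Type*} [NormedRing A] [NormedAlgebra ℂ A] [CompleteSpace A]
  {E : Type*} [AddCommGroup E] [Module ℂ E] [Module A E] [IsScalarTower ℂ A E]
  [IsSimpleModule A E]

omit [NormedAlgebra ℂ A] [Module ℂ E] [IsScalarTower ℂ A E] in
theorem isClosed_setOf_smul_eq_smul (x : A) (w : E) : IsClosed {y : A | y • w = x • w} := by
  have hker : IsClosed {y : A | y • w = 0} := by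
    by_cases hw : w = 0
    · simp [hw]
    · have := IsSimpleModule.ker_toSpanSingleton_isMaximal A hw
      exact Ideal.IsMaximal.isClosed (I := (LinearMap.toSpanSingleton A E w).ker)
  simpa [sub_smul, sub_eq_zero] using hker.preimage (continuous_id.sub (continuous_const (y := x)))

omit [Module ℂ E] [IsScalarTower ℂ A E] in
theorem exp_smul_eq_self {z : A} {w : E} (hz : z • w = 0) : NormedSpace.exp z • w = w := by
  have hterm (n : ℕ) : (((n.factorial : ℂ)⁻¹ • z ^ n) • w) = if n = 0 then w else 0 := by
    rcases n with _ | n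
    · simp
    · rw [pow_succ, ← smul_mul_assoc, mul_smul, hz, smul_zero, if_neg n.succ_ne_zero]
  have hclosed := isClosed_setOf_smul_eq_smul (1 : A) w
  suffices NormedSpace.exp z ∈ {y : A | y • w = (1 : A) • w} by simpa using this
  refine hclosed.mem_of_tendsto (NormedSpace.exp_series_hasSum_exp' (𝕂 := ℂ) z) ?_
  filter_upwards [Filter.eventually_ge_atTop {0}] with s hs
  have h0 : 0 ∈ s := hs (by simp)
  simp [Finset.sum_smul, hterm, h0]

theorem exp_smul_of_smul_eq {y : A} {k : ℂ} {w : E} (hy : y • w = k • w) :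
    NormedSpace.exp y • w = Complex.exp k • w := by
  have hz : (y - algebraMap ℂ A k) • w = 0 := by
    rw [sub_smul, hy, algebraMap_smul, sub_self]
  have hcomm : Commute (algebraMap ℂ A k) (y - algebraMap ℂ A k) := Algebra.commutes k _
  let _ := NormedAlgebra.restrictScalars ℚ ℂ A
  rw [← add_sub_cancel (algebraMap ℂ A k) y, NormedSpace.exp_add_of_commute hcomm, mul_smul,
    exp_smul_eq_self hz, ← NormedSpace.algebraMap_exp_comm, algebraMap_smul, Complex.exp_eq_exp_ℂ]

theorem exists_end_quotient_eq_smul (I : Ideal A) [hI : I.IsMaximal] (T : Module.End A (A ⧸ I)) :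
    ∃ k : ℂ, ∀ v, T v = k • v := by
  have hclosed : IsClosed (I : Set A) := inferInstance
  have hsimple : IsSimpleModule A (A ⧸ I) :=
    isSimpleModule_iff_quot_maximal.mpr ⟨I, hI, ⟨.refl A _⟩⟩
  have hnontriv : Nontrivial (A ⧸ I) := IsSimpleModule.nontrivial A _
  have hcont : Continuous T := by
    obtain ⟨t, ht⟩ := Submodule.Quotient.mk_surjective I (T (Submodule.Quotient.mk 1))
    have hT : T ∘ Submodule.Quotient.mk = fun y : A ↦ Submodule.Quotient.mk (p := I) (y * t) := by
      ext y
      rw [← smul_eq_mul, Submodule.Quotient.mk_smul, ht, ← map_smul, ← Submodule.Quotient.mk_smul,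
        smul_eq_mul, mul_one, Function.comp_apply]
    refine isQuotientMap_quotient_mk'.continuous_iff.mpr ?_
    exact (I.mkQL.continuous.comp (continuous_mul_const t)).congr fun y ↦ (congr_fun hT y).symm
  let F : (A ⧸ I) →L[ℂ] (A ⧸ I) := ⟨T.restrictScalars ℂ, hcont⟩
  obtain ⟨k, hk⟩ := spectrum.nonempty F
  refine ⟨k, fun v ↦ ?_⟩
  rcases LinearMap.bijective_or_eq_zero (T - k • 1) with hbij | hzero
  · have hunit : IsUnit (F - algebraMap ℂ _ k) := ContinuousLinearMap.isUnit_iff_bijective.mpr hbij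
    exact absurd (IsUnit.sub_iff.mp hunit) hk
  · exact sub_eq_zero.mp congr($hzero v)

theorem exists_end_eq_smul_of_isSimpleModule (T : Module.End A E) : ∃ k : ℂ, ∀ v, T v = k • v := by
  obtain ⟨I, hI, ⟨e⟩⟩ := isSimpleModule_iff_quot_maximal.mp (inferInstance : IsSimpleModule A E)
  obtain ⟨k, hk⟩ := exists_end_quotient_eq_smul I (e.toLinearMap ∘ₗ T ∘ₗ e.symm.toLinearMap)
  refine ⟨k, fun v ↦ e.injective ?_⟩
  rw [← algebraMap_smul A k v, map_smul, algebraMap_smul, ← hk (e v)]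
  simp

theorem exists_forall_mem_smul_eq (φ : Module.End ℂ E) (s : Finset E) :
    ∃ y : A, ∀ v ∈ s, y • v = φ v := by
  let φ' : Module.End (Module.End A E) E :=
    { toFun := φ
      map_add' := map_add φ
      map_smul' := fun T v ↦ by
        obtain ⟨k, hk⟩ := exists_end_eq_smul_of_isSimpleModule T
        simp [hk] }
  obtain ⟨y, hy⟩ := jacobson_density φ' s
  exact ⟨y, fun v hv ↦ (hy v hv).symm⟩

theorem units_conj_smul_of_smul_eq {K A E : Type*} [Field K] [Ring A] [Algebra K A]
    [AddCommGroup E] [Module K E] [Module A E] [IsScalarTower K A E] {u : Aˣ} {x : A} {v : E}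
    {κ τ : K} (hκ : κ ≠ 0) (hv : (u : A) • v = κ • v) (hx : (u : A) • x • v = (τ * κ) • x • v) :
    (u * x * ↑u⁻¹ : A) • v = τ • x • v := by
  have hinv : (↑u⁻¹ : A) • v = κ⁻¹ • v := by
    rw [eq_inv_smul_iff₀ hκ, ← smul_comm, ← hv, smul_smul, Units.inv_mul, one_smul]
  rw [mul_smul, hinv, smul_comm, mul_smul, hx, smul_smul]
  field_simp

theorem IsWeightRaising.exists_conj_smul_eq {N : Module.End ℂ E} (hN : IsWeightRaising N)
    (s : Finset E) : ∃ x : A, ∀ t : ℂ, ∃ u : Aˣ, ∀ w ∈ s,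
      (u * x * ↑u⁻¹ : A) • w = Complex.exp t • N w := by
  classical
  obtain ⟨H, hH, hcomm⟩ := hN
  have hs : (s : Set E) ⊆ Submodule.span ℂ {v | ∃ μ : ℂ, H v = μ • v} := by simp [hH]
  obtain ⟨B, hB, hsB⟩ := Submodule.subset_span_finite_of_subset_span hs
  obtain ⟨x, hx⟩ := exists_forall_mem_smul_eq (A := A) N B
  obtain ⟨h, hh⟩ := exists_forall_mem_smul_eq (A := A) H (B ∪ B.image N)
  refine ⟨x, fun t ↦ ?_⟩
  let _ := NormedAlgebra.restrictScalars ℚ ℂ A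
  obtain ⟨u, hu⟩ := NormedSpace.isUnit_exp (t • h)
  have hexp {v : E} {μ : ℂ} (hv : v ∈ B ∪ B.image N) (hHv : H v = μ • v) :
      (u : A) • v = Complex.exp (t * μ) • v :=
    hu ▸ exp_smul_of_smul_eq (by rw [smul_assoc, hh v hv, hHv, smul_smul])
  suffices hbasis : Set.EqOn (Algebra.lsmul ℂ ℂ E (u * x * ↑u⁻¹ : A))
      (Complex.exp t • N : Module.End ℂ E) B from
    ⟨u, fun w hw ↦ LinearMap.eqOn_span hbasis (hsB hw)⟩
  intro v hv
  obtain ⟨μ, hμ⟩ := hB hv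
  have hNv : H (N v) = (μ + 1) • N v := by simpa [hμ, add_smul] using congr($hcomm v)
  have hvB := Finset.mem_union_left (B.image N) hv
  have hNvB := Finset.mem_union_right B (Finset.mem_image_of_mem N hv)
  have := units_conj_smul_of_smul_eq (x := x) (τ := Complex.exp t) (Complex.exp_ne_zero _)
    (hexp hvB hμ) (by rw [hx v hv, hexp hNvB hNv, ← Complex.exp_add]; ring_nf)
  rwa [hx v hv] at this

end SimpleModules

section SpectralRadius

theorem spectralRadius_lt_top {𝕜 A : Type*} [NormedField 𝕜] [NormedRing A] [NormedAlgebra 𝕜 A]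
    [CompleteSpace A] (x : A) : spectralRadius 𝕜 x < ⊤ := by
  refine lt_of_le_of_lt (iSup₂_le fun k hk ↦ ?_) (ENNReal.coe_lt_top (r := ‖x‖₊ * ‖(1 : A)‖₊))
  exact_mod_cast spectrum.norm_le_norm_mul_of_mem hk

theorem spectralRadius_units_conjugate {𝕜 R : Type*} [NormedField 𝕜] [Ring R] [Algebra 𝕜 R]
    (u : Rˣ) (x : R) : spectralRadius 𝕜 (u * x * ↑u⁻¹ : R) = spectralRadius 𝕜 x := by
  simp_rw [spectralRadius, spectrum.units_conjugate]

theorem mem_spectrum_of_smul_eq {K R E : Type*} [Field K] [Ring R] [Algebra K R] [AddCommGroup E]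
    [Module K E] [Module R E] [IsScalarTower K R E] {y : R} {v : E} {k : K}
    (hv : v ≠ 0) (hy : y • v = k • v) : k ∈ spectrum K y := by
  rintro ⟨u, hu⟩
  refine hv ((IsUnit.smul_eq_zero u.isUnit).mp ?_)
  rw [hu, sub_smul, algebraMap_smul, hy, sub_self]

theorem SpectrallyBounded.preservesNilpotence {A E : Type*} [NormedRing A] [NormedAlgebra ℂ A]
    [CompleteSpace A] [AddCommGroup E] [Module ℂ E] [Module A E] [IsScalarTower ℂ A E]
    [IsSimpleModule A E] {a b c d : A} (hS : SpectrallyBounded (elemOp ℂ a b c d)) :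
    PreservesNilpotence (elemOp ℂ (Algebra.lsmul ℂ ℂ E a) (Algebra.lsmul ℂ ℂ E b)
      (Algebra.lsmul ℂ ℂ E c) (Algebra.lsmul ℂ ℂ E d)) := by
  classical
  intro N hN μ hμ
  obtain ⟨v, hv⟩ := hμ.exists_hasEigenvector
  obtain ⟨M, hM⟩ := hS
  obtain ⟨x, hx⟩ := hN.exists_conj_smul_eq (A := A) {b • v, d • v}
  have hbound (t : ℂ) : (‖Complex.exp t * μ‖₊ : ℝ≥0∞) ≤ M * spectralRadius ℂ x := by
    obtain ⟨u, hu⟩ := hx t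
    have hspec : Complex.exp t * μ ∈ spectrum ℂ (elemOp ℂ a b c d (u * x * ↑u⁻¹)) := by
      refine mem_spectrum_of_smul_eq hv.2 ?_
      rw [mul_smul, ← hv.apply_eq_smul]
      simp only [elemOp_apply, add_smul, mul_smul a, mul_smul c, mul_smul _ b, mul_smul _ d]
      simp [hu, smul_comm _ (Complex.exp t)]
    calc (‖Complex.exp t * μ‖₊ : ℝ≥0∞) ≤ spectralRadius ℂ _ := le_iSup₂ (α := ℝ≥0∞) _ hspec
      _ ≤ M * spectralRadius ℂ x := by
        simpa only [spectralRadius_units_conjugate] using hM (u * x * ↑u⁻¹)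
  by_contra hne
  obtain ⟨C, hC, -⟩ := ENNReal.lt_iff_exists_coe.mp
    (ENNReal.mul_lt_top (ENNReal.coe_lt_top (r := M)) (spectralRadius_lt_top (𝕜 := ℂ) x))
  have hC1 : (((C + 1 : ℝ≥0) : ℝ) : ℂ) / μ ≠ 0 :=
    div_ne_zero (by exact_mod_cast (by positivity : C + 1 ≠ 0)) hne
  have hle := hbound (Complex.log (((C + 1 : ℝ≥0) : ℝ) / μ))
  rw [Complex.exp_log hC1, div_mul_cancel₀ _ hne, hC, ENNReal.coe_le_coe, Complex.nnnorm_real,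
    NNReal.nnnorm_eq] at hle
  exact (lt_add_one C).not_ge hle

end SpectralRadius

section IrreducibleRepresentations

open Module

theorem PreservesNilpotence.commute_starCompSelf {K E : Type*} [Field K] [IsAlgClosed K]
    [NeZero (2 : K)] [AddCommGroup E] [Module K E] {a b c d : End K E}
    (hS : PreservesNilpotence (elemOp K a b c d)) (x : End K E) :
    Commute (starCompSelf K a b c d x) x := by
  by_cases hE : finrank K E = 2
  · obtain ⟨μ, hμ⟩ | ⟨μ, hμ⟩ := hS.starCompSelf_eq_smul_or_eq_trace_smul_one hE <;> rw [hμ]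
    · exact (Commute.refl x).smul_left μ
    · exact (Commute.one_left x).smul_left _
  · obtain ⟨μ, hμ⟩ := hS.exists_starCompSelf_eq_smul_of_finrank_ne_two hE
    exact hμ x ▸ (Commute.refl x).smul_left μ

variable {A : Type*} [NormedRing A] [NormedAlgebra ℂ A] [CompleteSpace A] {a b c d : A}

theorem SpectrallyBounded.preservesNilpotence_of_irreducible {E : Type*} [AddCommGroup E]
    [Module ℂ E] [Nontrivial E] (hS : SpectrallyBounded (elemOp ℂ a b c d)) (ρ : A →ₐ[ℂ] End ℂ E)
    (hρ : ∀ ζ : E, ζ ≠ 0 → ∀ η : E, ∃ y : A, ρ y ζ = η) :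
    PreservesNilpotence (elemOp ℂ (ρ a) (ρ b) (ρ c) (ρ d)) := by
  let _ : Module A E := Module.compHom E ρ.toRingHom
  have : IsScalarTower ℂ A E := ⟨fun k y ζ ↦ congr($(map_smul ρ k y) ζ)⟩
  have : IsSimpleModule A E := isSimpleModule_iff_toSpanSingleton_surjective.mpr ⟨‹_›, hρ⟩
  exact hS.preservesNilpotence (E := E)

theorem SpectrallyBounded.commutator_starCompSelf_mem_jacobsonRadical
    (hS : SpectrallyBounded (elemOp ℂ a b c d)) (x : A) :
    starCompSelf ℂ a b c d x * x - x * starCompSelf ℂ a b c d x ∈ jacobsonRadical A := by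
  refine Ideal.mem_sInf.mpr fun {L} hL ↦ ?_
  have hLmax : L.IsMaximal := hL.2
  have : IsSimpleModule A (A ⧸ L) := isSimpleModule_iff_quot_maximal.mpr ⟨L, hLmax, ⟨.refl A _⟩⟩
  have hcomm := (hS.preservesNilpotence (E := A ⧸ L)).commute_starCompSelf (Algebra.lsmul ℂ ℂ _ x)
  rw [← map_starCompSelf] at hcomm
  have hmk : (starCompSelf ℂ a b c d x * x - x * starCompSelf ℂ a b c d x) •
      (Submodule.Quotient.mk 1 : A ⧸ L) = 0 := by
    rw [sub_smul, mul_smul, mul_smul, sub_eq_zero]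
    exact congr($(hcomm.eq) (Submodule.Quotient.mk 1))
  rwa [← Submodule.Quotient.mk_smul, smul_eq_mul, mul_one, Submodule.Quotient.mk_eq_zero] at hmk

theorem spectrally_bounded_length_two_star_composition_general
    {E : Type*} [AddCommGroup E] [Module ℂ E] (a b c d : A)
    (hS : SpectrallyBounded (fun x : A => a * x * b + c * x * d))
    (ρ : A →ₐ[ℂ] End ℂ E)
    (hρirr : ∀ ζ : E, ζ ≠ 0 → ∀ η : E, ∃ y : A, ρ y ζ = η) :
    (finrank ℂ E ≠ 2 →
      ∃ μ : ℂ, ∀ x : A,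
        ρ b * (ρ a * ρ x * ρ b + ρ c * ρ x * ρ d) * ρ a +
          ρ d * (ρ a * ρ x * ρ b + ρ c * ρ x * ρ d) * ρ c = μ • ρ x) ∧
    (finrank ℂ E = 2 →
      (∃ μ : ℂ, ∀ x : A,
        ρ b * (ρ a * ρ x * ρ b + ρ c * ρ x * ρ d) * ρ a +
          ρ d * (ρ a * ρ x * ρ b + ρ c * ρ x * ρ d) * ρ c = μ • ρ x) ∨
      (∃ μ : ℂ, ∀ x : A,
        ρ b * (ρ a * ρ x * ρ b + ρ c * ρ x * ρ d) * ρ a +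
          ρ d * (ρ a * ρ x * ρ b + ρ c * ρ x * ρ d) * ρ c =
            (μ * LinearMap.trace ℂ E (ρ x)) • 1)) ∧
    (∀ x : A,
      (b * (a * x * b + c * x * d) * a + d * (a * x * b + c * x * d) * c) * x -
        x * (b * (a * x * b + c * x * d) * a + d * (a * x * b + c * x * d) * c) ∈
          jacobsonRadical A) := by
  have hS : SpectrallyBounded (elemOp ℂ a b c d) := hS
  refine ⟨fun hE ↦ ?_, fun hE ↦ ?_, hS.commutator_starCompSelf_mem_jacobsonRadical⟩
  · cases subsingleton_or_nontrivial E
    · exact ⟨0, fun _ ↦ Subsingleton.elim _ _⟩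
    · have hρS := hS.preservesNilpotence_of_irreducible ρ hρirr
      obtain ⟨μ, hμ⟩ := hρS.exists_starCompSelf_eq_smul_of_finrank_ne_two hE
      exact ⟨μ, fun x ↦ hμ (ρ x)⟩
  · have : Nontrivial E := nontrivial_of_finrank_eq_succ hE
    have hρS := hS.preservesNilpotence_of_irreducible ρ hρirr
    exact (hρS.starCompSelf_eq_smul_or_eq_trace_smul_one hE).imp
      (fun ⟨μ, hμ⟩ ↦ ⟨μ, fun x ↦ hμ (ρ x)⟩) (fun ⟨μ, hμ⟩ ↦ ⟨μ, fun x ↦ hμ (ρ x)⟩)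

end IrreducibleRepresentations

/-- **Corollary 3.9.** Let `A` be a unital complex Banach algebra, let
`S = M_{a,b} + M_{c,d}` be a spectrally bounded elementary operator on `A` of
length `2`, and set `S* = M_{b,a} + M_{d,c}`.  Let `ρ` be an irreducible
representation of `A` on a complex Banach space `E`.  If `dim E ≠ 2` then
`S_ρ* S_ρ` is a scalar multiple of the identity map; if `dim E = 2` then either
`S_ρ* S_ρ` is a scalar multiple of the identity map or there is `μ ∈ ℂ` with
`S_ρ*(S_ρ(z)) = μ·Tr(z)·I` for all `z ∈ ρ(A)`.  In either case
`[S*(S(x)), x] ∈ rad A` for every `x ∈ A`. -/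
theorem spectrally_bounded_length_two_star_composition
    {A : Type*} [NormedRing A] [NormedAlgebra ℂ A] [CompleteSpace A]
    {E : Type*} [NormedAddCommGroup E] [NormedSpace ℂ E] [CompleteSpace E]
    (a b c d : A)
    (hSlen : ∀ (m : ℕ) (u v : Fin m → A),
      (∀ x : A, a * x * b + c * x * d = ∑ i, u i * x * v i) → 2 ≤ m)
    (hS : SpectrallyBounded (fun x : A => a * x * b + c * x * d))
    (ρ : A →ₐ[ℂ] (E →L[ℂ] E)) (hρcont : Continuous ρ)
    (hρirr : ∀ ζ : E, ζ ≠ 0 → ∀ η : E, ∃ y : A, ρ y ζ = η) :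
    (Module.finrank ℂ E ≠ 2 →
      ∃ μ : ℂ, ∀ x : A,
        ρ b * (ρ a * ρ x * ρ b + ρ c * ρ x * ρ d) * ρ a +
          ρ d * (ρ a * ρ x * ρ b + ρ c * ρ x * ρ d) * ρ c = μ • ρ x) ∧
    (Module.finrank ℂ E = 2 →
      (∃ μ : ℂ, ∀ x : A,
        ρ b * (ρ a * ρ x * ρ b + ρ c * ρ x * ρ d) * ρ a +
          ρ d * (ρ a * ρ x * ρ b + ρ c * ρ x * ρ d) * ρ c = μ • ρ x) ∨
      (∃ μ : ℂ, ∀ x : A,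
        ρ b * (ρ a * ρ x * ρ b + ρ c * ρ x * ρ d) * ρ a +
          ρ d * (ρ a * ρ x * ρ b + ρ c * ρ x * ρ d) * ρ c =
            (μ * LinearMap.trace ℂ E (ρ x).toLinearMap) • (1 : E →L[ℂ] E))) ∧
    (∀ x : A,
      (b * (a * x * b + c * x * d) * a + d * (a * x * b + c * x * d) * c) * x -
        x * (b * (a * x * b + c * x * d) * a + d * (a * x * b + c * x * d) * c) ∈
          jacobsonRadical A) := by
  simp only [← ContinuousLinearMap.coe_inj]
  exact spectrally_bounded_length_two_star_composition_general a b c d hS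
    (AlgHom.comp ⟨ContinuousLinearMap.toLinearMapRingHom, fun _ ↦ rfl⟩ ρ) hρirr
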